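/- arXiv:1610.02750 — 3 statements merged into one kernel-verified Lean document; each statement's English description precedes it below -/
import Mathlib

section
/- For every n ≥ 1 and every integer k, there exists γ ∈ Φ(n) such that γ, applied as a matrix to the column vector (1, 2k+1) (which represents the cusp B^k·1 = 1/(2k+1) of the extended upper half plane), yields the vector (2k+1, 1) or its negative (−(2k+1), −1) (which represents the cusp A^k·1 = 2k+1). In other words, the cusps A^k·1 and B^k·1 define the same point of the quotient of the extended upper half plane by Φ(n). -/
/-!
The matrix `C = B A⁻¹` sends `(1, 1)` to `-(1, 1)`, so it fixes the cusp `1`. Therefore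
`γ = A ^ k * C ^ k * B ^ (-k)` carries the cusp `B ^ k · 1` to `A ^ k · 1`. The exponents of `A` and
of `B` in `γ` both sum to zero, so `γ` is trivial in the abelianization of `Γ(2)`, i.e. it lies in
the commutator subgroup `⁅Γ(2), Γ(2)⁆ ≤ Φ(n)`.
-/

open Matrix

/-- `Γ(2)`, the principal congruence subgroup of level 2 in `SL(2, ℤ)`. -/
def Gamma2 : Subgroup (Matrix.SpecialLinearGroup (Fin 2) ℤ) := CongruenceSubgroup.Gamma 2

/-- The matrix `A = [[1,2],[0,1]]` in `SL(2, ℤ)`. -/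
def Amat : Matrix.SpecialLinearGroup (Fin 2) ℤ :=
  ⟨!![1, 2; 0, 1], by norm_num [Matrix.det_fin_two_of]⟩

/-- The matrix `B = [[1,0],[2,1]]` in `SL(2, ℤ)`. -/
def Bmat : Matrix.SpecialLinearGroup (Fin 2) ℤ :=
  ⟨!![1, 0; 2, 1], by norm_num [Matrix.det_fin_two_of]⟩

/-- The Fermat group `Φ(n)`: the subgroup of `SL(2, ℤ)` generated by `A^n`, `B^n` and the
commutator subgroup `Γ(2)'` of `Γ(2)`. -/
def Phi (n : ℕ) : Subgroup (Matrix.SpecialLinearGroup (Fin 2) ℤ) :=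
  Subgroup.closure {Amat ^ n, Bmat ^ n} ⊔ ⁅Gamma2, Gamma2⁆

/-- `Φ±(n)`: the subgroup of `SL(2, ℤ)` generated by `A^n`, `B^n`, `-I` and the commutator
subgroup of `Γ(2)`; the preimage in `SL(2, ℤ)` of the image of `Φ(n)` in `PSL(2, ℤ)`. -/
def PhiPM (n : ℕ) : Subgroup (Matrix.SpecialLinearGroup (Fin 2) ℤ) :=
  Subgroup.closure {Amat ^ n, Bmat ^ n, -1} ⊔ ⁅Gamma2, Gamma2⁆

/-- A word in `a` and `b` with both exponent sums zero is a product of commutators: it dies in the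
abelianization of `H`. -/
lemma zpow_word_mem_commutator {G : Type*} [Group G] (H : Subgroup G) {a b : G}
    (ha : a ∈ H) (hb : b ∈ H) (k : ℤ) : a ^ k * (b * a⁻¹) ^ k * b ^ (-k) ∈ ⁅H, H⁆ := by
  rw [← Subgroup.map_subtype_commutator]
  refine ⟨(⟨a, ha⟩ : H) ^ k * (⟨b, hb⟩ * (⟨a, ha⟩ : H)⁻¹) ^ k * (⟨b, hb⟩ : H) ^ (-k), ?_, by simp⟩
  rw [SetLike.mem_coe, ← Abelianization.ker_of, MonoidHom.mem_ker]
  simp only [map_mul, map_zpow, map_inv, mul_zpow, _root_.inv_zpow, _root_.zpow_neg]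
  simp

lemma Amat_mem : Amat ∈ Gamma2 := by
  rw [Gamma2, CongruenceSubgroup.Gamma_mem]
  simp [Amat]
  decide

lemma Bmat_mem : Bmat ∈ Gamma2 := by
  rw [Gamma2, CongruenceSubgroup.Gamma_mem]
  simp [Bmat]
  decide

lemma Amat_inv : ((Amat⁻¹ : Matrix.SpecialLinearGroup (Fin 2) ℤ) : Matrix (Fin 2) (Fin 2) ℤ)
    = !![1, -2; 0, 1] := by
  rw [Matrix.SpecialLinearGroup.coe_inv, Matrix.adjugate_fin_two]
  simp [Amat]

lemma Amat_zpow (k : ℤ) : ((Amat ^ k : Matrix.SpecialLinearGroup (Fin 2) ℤ) : Matrix (Fin 2) (Fin 2) ℤ)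
    = !![1, 2 * k; 0, 1] := by
  induction k using Int.induction_on with
  | zero => simp [Matrix.one_fin_two]
  | succ i ih =>
    rw [_root_.zpow_add_one, Matrix.SpecialLinearGroup.coe_mul, ih]
    simp [Amat]; ring
  | pred i ih =>
    rw [_root_.zpow_sub_one, Matrix.SpecialLinearGroup.coe_mul, ih, Amat_inv]
    simp; ring

lemma Bmat_inv : ((Bmat⁻¹ : Matrix.SpecialLinearGroup (Fin 2) ℤ) : Matrix (Fin 2) (Fin 2) ℤ)
    = !![1, 0; -2, 1] := by
  rw [Matrix.SpecialLinearGroup.coe_inv, Matrix.adjugate_fin_two]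
  simp [Bmat]

lemma Bmat_zpow (k : ℤ) : ((Bmat ^ k : Matrix.SpecialLinearGroup (Fin 2) ℤ) : Matrix (Fin 2) (Fin 2) ℤ)
    = !![1, 0; 2 * k, 1] := by
  induction k using Int.induction_on with
  | zero => simp [Matrix.one_fin_two]
  | succ i ih =>
    rw [_root_.zpow_add_one, Matrix.SpecialLinearGroup.coe_mul, ih]
    simp [Bmat]; ring
  | pred i ih =>
    rw [_root_.zpow_sub_one, Matrix.SpecialLinearGroup.coe_mul, ih, Bmat_inv]
    simp; ring

/-- Every power of `B A⁻¹` fixes the cusp `1`. -/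
lemma BA_zpow_mulVec (k : ℤ) :
    (((Bmat * Amat⁻¹) ^ k : Matrix.SpecialLinearGroup (Fin 2) ℤ) : Matrix (Fin 2) (Fin 2) ℤ) *ᵥ ![1, 1]
      = ![1, 1] ∨
    (((Bmat * Amat⁻¹) ^ k : Matrix.SpecialLinearGroup (Fin 2) ℤ) : Matrix (Fin 2) (Fin 2) ℤ) *ᵥ ![1, 1]
      = -![1, 1] := by
  have h1 : ((Bmat * Amat⁻¹ : Matrix.SpecialLinearGroup (Fin 2) ℤ) : Matrix (Fin 2) (Fin 2) ℤ) *ᵥ ![1, 1]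
      = -![1, 1] := by
    rw [Matrix.SpecialLinearGroup.coe_mul, Amat_inv]
    ext i; fin_cases i <;> simp [Bmat, mulVec, dotProduct]
  have h2 : (((Bmat * Amat⁻¹)⁻¹ : Matrix.SpecialLinearGroup (Fin 2) ℤ) : Matrix (Fin 2) (Fin 2) ℤ) *ᵥ
      ![1, 1] = -![1, 1] := by
    rw [_root_.mul_inv_rev, inv_inv, Matrix.SpecialLinearGroup.coe_mul, Bmat_inv]
    ext i; fin_cases i <;> simp [Amat, mulVec, dotProduct]
  induction k using Int.induction_on with
  | zero => left; simp
  | succ i ih =>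
    rw [_root_.zpow_add_one, Matrix.SpecialLinearGroup.coe_mul, ← mulVec_mulVec, h1, mulVec_neg]
    rcases ih with h | h <;> rw [h]
    · exact Or.inr rfl
    · exact Or.inl (neg_neg _)
  | pred i ih =>
    rw [_root_.zpow_sub_one, Matrix.SpecialLinearGroup.coe_mul, ← mulVec_mulVec, h2, mulVec_neg]
    rcases ih with h | h <;> rw [h]
    · exact Or.inr rfl
    · exact Or.inl (neg_neg _)

/-- For every `n ≥ 1` and every integer `k`, some `γ ∈ Φ(n)` carries the primitive vector
`(1, 2k+1)` (representing the cusp `B^k·1 = 1/(2k+1)`) to `±(2k+1, 1)` (representing the cusp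
`A^k·1 = 2k+1`); i.e. the cusps `A^k·1` and `B^k·1` agree on the quotient by `Φ(n)`. -/
theorem cusp_Ak_eq_Bk (n : ℕ) (hn : 1 ≤ n) (k : ℤ) :
    ∃ γ ∈ Phi n,
      (γ : Matrix (Fin 2) (Fin 2) ℤ) *ᵥ ![1, 2 * k + 1] = ![2 * k + 1, 1] ∨
      (γ : Matrix (Fin 2) (Fin 2) ℤ) *ᵥ ![1, 2 * k + 1] = -![2 * k + 1, 1] := by
  refine ⟨Amat ^ k * (Bmat * Amat⁻¹) ^ k * Bmat ^ (-k),
    (le_sup_right : ⁅Gamma2, Gamma2⁆ ≤ Phi n)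
      (zpow_word_mem_commutator Gamma2 Amat_mem Bmat_mem k), ?_⟩
  have hB : ((Bmat ^ (-k) : Matrix.SpecialLinearGroup (Fin 2) ℤ) : Matrix (Fin 2) (Fin 2) ℤ) *ᵥ
      ![1, 2 * k + 1] = ![1, 1] := by
    rw [Bmat_zpow]; ext i; fin_cases i <;> simp [mulVec, dotProduct]
  have hA : ((Amat ^ k : Matrix.SpecialLinearGroup (Fin 2) ℤ) : Matrix (Fin 2) (Fin 2) ℤ) *ᵥ
      ![1, 1] = ![2 * k + 1, 1] := by
    rw [Amat_zpow]; ext i; fin_cases i <;> simp [mulVec, dotProduct, add_comm]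
  rw [Matrix.SpecialLinearGroup.coe_mul, Matrix.SpecialLinearGroup.coe_mul, ← mulVec_mulVec, hB, ← mulVec_mulVec]
  rcases BA_zpow_mulVec k with h | h <;> rw [h]
  · exact Or.inl hA
  · right; rw [mulVec_neg, hA]
end

section
/- For every n ≥ 1, the polynomial x^n + y^n + z^n − 1 generates a prime ideal in the polynomial ring ℂ[x,y,z]; equivalently, the quotient ring ℂ[x,y,z]/(x^n + y^n + z^n − 1) is an integral domain. -/
open MvPolynomial

/-!
View `x^n + y^n + z^n - 1` as the monic polynomial `x^n + c` over `ℂ[y, z]`, where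
`c = y^n + z^n - 1`. The plane curve `c = 0` passes through the point `(1, 0)` and is smooth there,
as `∂c/∂y = n ≠ 0` at that point. So, for the maximal ideal `P` of `(1, 0)`, we have `c ∈ P` and
`c ∉ P ^ 2`, and Eisenstein's criterion at `P` gives irreducibility. Since `ℂ[x, y, z]` is
factorial, the irreducible polynomial is prime.
-/

/-- A polynomial in the square of the maximal ideal of a point has vanishing partial derivatives
at that point. -/
lemma eval_pderiv_eq_zero_of_mem_sq {σ R : Type*} [CommRing R] (a : σ → R) (i : σ)
    {f : MvPolynomial σ R} (hf : f ∈ RingHom.ker (eval a) ^ 2) :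
    eval a (pderiv i f) = 0 := by
  rw [pow_two] at hf
  induction hf using Submodule.mul_induction_on' with
  | mem_mul_mem p hp q hq =>
    rw [RingHom.mem_ker] at hp hq
    simp [Derivation.leibniz, hp, hq]
  | add p _ q _ hp hq => simp [hp, hq]

lemma irreducible_X_pow_add_C_fermat (n : ℕ) (hn : 1 ≤ n) :
    Irreducible (Polynomial.X ^ n +
      Polynomial.C ((X 0 : MvPolynomial (Fin 2) ℂ) ^ n + X 1 ^ n - 1)) := by
  have hn0 : n ≠ 0 := by omega
  have hmonic := Polynomial.monic_X_pow_add_C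
    ((X 0 : MvPolynomial (Fin 2) ℂ) ^ n + X 1 ^ n - 1) hn0
  have hprime : (RingHom.ker (eval (![1, 0] : Fin 2 → ℂ))).IsPrime := RingHom.ker_isPrime _
  refine Polynomial.irreducible_of_eisenstein_criterion hprime ?_ ?_ ?_ ?_ hmonic.isPrimitive
  · rw [hmonic.leadingCoeff]
    exact hprime.one_notMem
  · intro k hk
    rw [Polynomial.degree_X_pow_add_C hn, Nat.cast_lt] at hk
    rw [Polynomial.coeff_add, Polynomial.coeff_X_pow, if_neg hk.ne, zero_add, Polynomial.coeff_C]
    split_ifs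
    · simp [RingHom.mem_ker, hn0]
    · exact zero_mem _
  · rw [Polynomial.degree_X_pow_add_C hn]
    exact_mod_cast hn
  · intro h
    rw [Polynomial.coeff_add, Polynomial.coeff_X_pow, if_neg hn0.symm, zero_add,
      Polynomial.coeff_C_zero] at h
    have hderiv := eval_pderiv_eq_zero_of_mem_sq _ 0 h
    simp [pderiv_X, Derivation.leibniz_pow, hn0] at hderiv

/-- For every `n ≥ 1`, the polynomial `x^n + y^n + z^n - 1` generates a prime ideal of
`ℂ[x, y, z]`; i.e. the coordinate ring of the affine Fermat surface is an integral domain. -/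
theorem fermat_surface_ideal_isPrime (n : ℕ) (hn : 1 ≤ n) :
    (Ideal.span {(X 0 : MvPolynomial (Fin 3) ℂ) ^ n + X 1 ^ n + X 2 ^ n - 1}).IsPrime := by
  have himage : finSuccEquiv ℂ 2 (X 0 ^ n + X 1 ^ n + X 2 ^ n - 1) =
      Polynomial.X ^ n + Polynomial.C (X 0 ^ n + X 1 ^ n - 1) := by
    have h1 : finSuccEquiv ℂ 2 (X 1) = Polynomial.C (X 0) := finSuccEquiv_X_succ (j := 0)
    have h2 : finSuccEquiv ℂ 2 (X 2) = Polynomial.C (X 1) := finSuccEquiv_X_succ (j := 1)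
    simp only [map_add, map_sub, map_pow, map_one, finSuccEquiv_X_zero, h1, h2]
    ring
  have hirr : Irreducible ((X 0 : MvPolynomial (Fin 3) ℂ) ^ n + X 1 ^ n + X 2 ^ n - 1) := by
    rw [← MulEquiv.irreducible_iff (finSuccEquiv ℂ 2), himage]
    exact irreducible_X_pow_add_C_fermat n hn
  exact (Ideal.span_singleton_prime hirr.ne_zero).mpr hirr.prime
end

section
/- Let n ≥ 3. In the free ℤ-module with basis {e_{i,j} : 1 ≤ i ≤ n−1, 0 ≤ j ≤ n−1}, the (n−2)(n−1) elements γ_{i,j} := e_{i,0} − e_{i+1,n−1} + e_{i+1,j} − e_{i,j+1}, for 1 ≤ i ≤ n−2 and 0 ≤ j ≤ n−2, are linearly independent over ℤ. (This is the linear-independence computation showing that the cycles γ_{i,j} = [A^iτ] − [A^{i+1}B^{n−1}τ] + [A^{i+1}B^jτ] − [A^iB^{j+1}τ] form a basis of the integral homology H₁(X_{Φ(n)}, ℤ), which has rank (n−1)(n−2).) -/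
/-!
The family is triangular for the row index: `γ_{i,j}` lives in rows `i` and `i + 1`, and its part in
row `i` is `e_{i,0} - e_{i,j+1}`. In a vanishing combination whose coefficients are zero in all rows
before `i`, the coefficient of `e_{i,j+1}` is therefore minus that of `γ_{i,j}`, so the latter vanishes
as well; strong induction on `i` gives independence.
-/

/-- For `n ≥ 3`, in the free `ℤ`-module with basis `e_{i,j}` (`1 ≤ i ≤ n-1`, `0 ≤ j ≤ n-1`;
here the basis is indexed by `Fin (n-1) × Fin n`, the first coordinate `a` encoding `i = a+1`
and the second encoding `j`), the `(n-2)(n-1)` elements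
`γ_{i,j} = e_{i,0} - e_{i+1,n-1} + e_{i+1,j} - e_{i,j+1}` for `1 ≤ i ≤ n-2`, `0 ≤ j ≤ n-2`
are linearly independent over `ℤ`. -/
theorem gamma_cycles_linearIndependent (n : ℕ) (hn : 3 ≤ n) :
    LinearIndependent ℤ (fun p : Fin (n - 2) × Fin (n - 1) =>
      -- γ_{i,j} with i = p.1 + 1 and j = p.2 :
      -- e_{i,0}
      (Finsupp.single ((⟨(p.1 : ℕ), by omega⟩ : Fin (n - 1)), (⟨0, by omega⟩ : Fin n)) 1 :
          (Fin (n - 1) × Fin n) →₀ ℤ)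
      -- - e_{i+1,n-1}
      - Finsupp.single ((⟨(p.1 : ℕ) + 1, by omega⟩ : Fin (n - 1)), (⟨n - 1, by omega⟩ : Fin n)) 1
      -- + e_{i+1,j}
      + Finsupp.single ((⟨(p.1 : ℕ) + 1, by omega⟩ : Fin (n - 1)), (⟨(p.2 : ℕ), by omega⟩ : Fin n)) 1
      -- - e_{i,j+1}
      - Finsupp.single ((⟨(p.1 : ℕ), by omega⟩ : Fin (n - 1)), (⟨(p.2 : ℕ) + 1, by omega⟩ : Fin n)) 1) := by
  rw [Fintype.linearIndependent_iff]
  intro g hg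
  have key : ∀ a : ℕ, ∀ p : Fin (n - 2) × Fin (n - 1), (p.1 : ℕ) = a → g p = 0 := by
    intro a
    induction a using Nat.strong_induction_on with
    | _ a ih =>
    rintro ⟨i, j⟩ hi
    -- compare the coefficients of `e_{i,j+1}`
    have h := DFunLike.congr_fun hg
      ((⟨(i : ℕ), by omega⟩ : Fin (n - 1)), (⟨(j : ℕ) + 1, by omega⟩ : Fin n))
    rw [Finsupp.finsetSum_apply, Finset.sum_eq_single (i, j)] at h
    · simpa [Finsupp.single_apply] using h
    · rintro ⟨i', j'⟩ - hne
      by_cases hlt : (i' : ℕ) < a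
      · simp [ih _ hlt (i', j') rfl]
      · have h1 : (i' : ℕ) + 1 ≠ i := by simp only at hi; omega
        have h2 : ¬ ((i' : ℕ) = i ∧ (j' : ℕ) = j) := by
          rintro ⟨h, h'⟩
          exact hne (Prod.ext (Fin.ext h) (Fin.ext h'))
        simp [h1, h2]
    · simp
  exact fun p => key _ p rfl
end
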